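/- Let α ∈ (0,1). There exists a constant C > 0 (depending only on α) such that for every sequence of real coefficients (c_n)_{n≥1} with Σ_{n=1}^∞ c_n² < ∞, every sequence of positive reals (λ_n)_{n≥1}, and every t > 0, one has Σ_{n=1}^∞ c_n² λ_n² E_α(−λ_n t^α)² ≤ C² t^(−2α) Σ_{n=1}^∞ c_n² (in particular the left-hand series converges). -/

import Mathlib

/-- The Mittag-Leffler function `E_α(x) = ∑_{k=0}^∞ x^k / Γ(αk + 1)`. -/
noncomputable def mittagLeffler (α x : ℝ) : ℝ :=
  ∑' k : ℕ, x ^ k / Real.Gamma (α * k + 1)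

section MLHelpers

open Filter Topology MeasureTheory Set

lemma ml_gamma_pos {α : ℝ} (hα : 0 < α) (k : ℕ) : 0 < Real.Gamma (α * k + 1) :=
  Real.Gamma_pos_of_pos (by positivity)

lemma ml_gamma_ratio {α : ℝ} (hα : 0 < α) (y : ℝ) (hy : 0 < y) :
    y ^ α * Real.Gamma (y + 1) ≤ Real.Gamma (y + 1 + α) := by
  have h := Real.convexOn_log_Gamma.slope_mono_adjacent (x := y) (y := y + 1) (z := y + 1 + α)
    hy (by simp only [mem_Ioi]; positivity) (by linarith) (by linarith)
  have g0 := Real.Gamma_pos_of_pos hy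
  have g1 : 0 < Real.Gamma (y + 1) := Real.Gamma_pos_of_pos (by positivity)
  have g2 : 0 < Real.Gamma (y + 1 + α) := Real.Gamma_pos_of_pos (by positivity)
  simp only [Function.comp] at h
  rw [add_sub_cancel_left, add_sub_cancel_left, le_div_iff₀ hα] at h
  have e : Real.log (Real.Gamma (y+1)) = Real.log y + Real.log (Real.Gamma y) := by
    rw [Real.Gamma_add_one hy.ne', Real.log_mul hy.ne' g0.ne']
  rw [← Real.log_le_log_iff (by positivity) g2, Real.log_mul (by positivity) g1.ne', Real.log_rpow hy]
  have : Real.log (Real.Gamma (y+1)) - Real.log (Real.Gamma y) = Real.log y := by rw [e]; ring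
  rw [div_one, this] at h
  linarith

lemma ml_summable {α : ℝ} (hα : 0 < α) (x : ℝ) :
    Summable (fun k : ℕ => x ^ k / Real.Gamma (α * k + 1)) := by
  by_cases hx : x = 0
  · refine summable_of_ne_finset_zero (s := {0}) ?_
    intro b hb
    simp at hb
    simp [hx, hb]
  refine summable_of_ratio_test_tendsto_lt_one (l := 0) one_pos ?_ ?_
  · exact Eventually.of_forall fun k => div_ne_zero (pow_ne_zero _ hx) (ml_gamma_pos hα k).ne'
  have h1 : Tendsto (fun k : ℕ => |x| / (α * k) ^ α) atTop (𝓝 0) := by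
    refine Tendsto.const_div_atTop ?_ _
    exact (tendsto_rpow_atTop hα).comp (tendsto_natCast_atTop_atTop.const_mul_atTop hα)
  refine squeeze_zero' (Eventually.of_forall fun k => by positivity) ?_ h1
  filter_upwards [eventually_gt_atTop 0] with k hk
  have hk' : (0:ℝ) < k := by exact_mod_cast hk
  have g1 := ml_gamma_pos hα k
  have g2 := ml_gamma_pos hα (k+1)
  have hr := ml_gamma_ratio hα (α * k) (by positivity)
  have e : α * k + 1 + α = α * ((k+1 : ℕ) : ℝ) + 1 := by push_cast; ring
  rw [e] at hr
  rw [norm_div, norm_div, norm_pow, norm_pow, Real.norm_of_nonneg g1.le, Real.norm_of_nonneg g2.le,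
    Real.norm_eq_abs]
  have hxp : 0 < |x| := abs_pos.mpr hx
  have hp : 0 < (α * (k:ℝ)) ^ α := by positivity
  rw [div_div_div_eq, div_le_div_iff₀ (by positivity) hp, pow_succ]
  have : |x| ^ k * |x| * ((α * k) ^ α * Real.Gamma (α * k + 1)) ≤
     |x| ^ k * |x| * Real.Gamma (α * ((k+1 : ℕ) : ℝ) + 1) := by gcongr
  linarith

lemma ml_continuous {α : ℝ} (hα : 0 < α) : Continuous (mittagLeffler α) := by
  rw [continuous_iff_continuousAt]
  intro x
  have : ContinuousOn (mittagLeffler α) (Metric.ball 0 (|x| + 1)) := by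
    unfold mittagLeffler
    refine continuousOn_tsum (fun i => by fun_prop) (ml_summable hα (|x| + 1)) ?_
    intro n y hy
    have g := ml_gamma_pos hα n
    rw [norm_div, norm_pow, Real.norm_of_nonneg g.le]
    have : ‖y‖ ≤ |x| + 1 := by simpa using (Metric.mem_ball.mp hy).le
    gcongr
  exact this.continuousAt (Metric.isOpen_ball.mem_nhds (by simp))

lemma ml_beta {a b t : ℝ} (ha : 0 < a) (hb : 0 < b) (ht : 0 < t) :
    ∫ s in (0:ℝ)..t, (t - s) ^ (a - 1) * s ^ (b - 1) =
      t ^ (a + b - 1) * (Real.Gamma a * Real.Gamma b / Real.Gamma (a + b)) := by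
  have h := Complex.betaIntegral_scaled (b : ℂ) (a : ℂ) ht
  rw [Complex.betaIntegral_eq_Gamma_mul_div _ _ (by simpa) (by simpa)] at h
  apply Complex.ofReal_injective
  rw [← intervalIntegral.integral_ofReal]
  rw [show (b : ℂ) + a = ((a + b : ℝ) : ℂ) by push_cast; ring] at h
  simp only [Complex.Gamma_ofReal] at h
  push_cast [Complex.ofReal_cpow ht.le] 
  rw [show (a : ℂ) + b - 1 = ((a + b : ℝ) : ℂ) - 1 by push_cast; ring, mul_comm (Real.Gamma a : ℂ), ← h]
  rw [intervalIntegral.integral_of_le ht.le, intervalIntegral.integral_of_le ht.le]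
  refine setIntegral_congr_fun measurableSet_Ioc fun x hx => ?_
  rw [Complex.ofReal_cpow (sub_nonneg.mpr hx.2), Complex.ofReal_cpow hx.1.le]
  push_cast
  ring

lemma ml_integrable {a : ℝ} (ha : 0 < a) (t b c : ℝ) {z : ℝ → ℝ} (hz : Continuous z) :
    IntervalIntegrable (fun s => (t - s) ^ (a - 1) * z s) volume b c := by
  have h : IntervalIntegrable (fun s : ℝ => s ^ (a - 1)) volume (t - b) (t - c) :=
    intervalIntegral.intervalIntegrable_rpow' (by linarith)
  have h2 := h.comp_sub_left t
  simp only [sub_sub_cancel] at h2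
  exact h2.mul_continuousOn hz.continuousOn

lemma ml_volterra {α : ℝ} (hα : 0 < α) {t : ℝ} (ht : 0 < t) :
    mittagLeffler α (-(t ^ α)) + (Real.Gamma α)⁻¹ *
      ∫ s in (0:ℝ)..t, (t - s) ^ (α - 1) * mittagLeffler α (-(s ^ α)) = 1 := by
  have gα := Real.Gamma_pos_of_pos hα
  set F : ℕ → ℝ → ℝ := fun k s => (t - s) ^ (α - 1) * ((-(s ^ α)) ^ k / Real.Gamma (α * k + 1)) with hF
  have hcont : Continuous fun s : ℝ => s ^ α := Real.continuous_rpow_const hα.le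
  have hFi : ∀ k, IntervalIntegrable (F k) volume 0 t := by
    intro k
    exact ml_integrable hα t 0 t (z := fun s => (-(s ^ α)) ^ k / Real.Gamma (α * k + 1)) (by fun_prop)
  have key : ∀ k : ℕ, ∫ s in (0:ℝ)..t, (t - s) ^ (α - 1) * ((s ^ α) ^ k / Real.Gamma (α * k + 1)) =
      Real.Gamma α * ((t ^ α) ^ (k + 1) / Real.Gamma (α * (k + 1 : ℕ) + 1)) := by
    intro k
    have hb := ml_beta (a := α) (b := α * k + 1) hα (by positivity) ht
    have g1 := ml_gamma_pos hα k
    have e : ∀ s ∈ uIcc 0 t, (t - s) ^ (α - 1) * ((s ^ α) ^ k / Real.Gamma (α * k + 1)) =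
       (Real.Gamma (α * k + 1))⁻¹ * ((t - s) ^ (α - 1) * s ^ (α * k + 1 - 1)) := by
      intro s hs
      rw [uIcc_of_le ht.le] at hs
      rw [add_sub_cancel_right, Real.rpow_mul hs.1, Real.rpow_natCast]
      ring
    rw [intervalIntegral.integral_congr e, intervalIntegral.integral_const_mul, hb,
      ← Real.rpow_natCast (t ^ α), ← Real.rpow_mul ht.le,
      show α + (α * k + 1) - 1 = α * (k + 1 : ℕ) by push_cast; ring,
      show α + (α * k + 1) = α * (k + 1 : ℕ) + 1 by push_cast; ring]
    field_simp
  have key2 : ∀ k : ℕ, ∫ s in (0:ℝ)..t, F k s =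
      - (Real.Gamma α * ((-(t ^ α)) ^ (k + 1) / Real.Gamma (α * (k + 1 : ℕ) + 1))) := by
    intro k
    have e : ∀ s, F k s = (-1) ^ k * ((t - s) ^ (α - 1) * ((s ^ α) ^ k / Real.Gamma (α * k + 1))) := by
      intro s
      simp only [hF]
      rw [neg_pow (s ^ α)]; ring
    simp only [e]
    rw [intervalIntegral.integral_const_mul, key, neg_pow (t ^ α) (k+1)]
    ring
  have hs := hasSum_integral_of_summable_integral_norm (μ := volume.restrict (Ioc 0 t)) (F := F)
    (fun k => (hFi k).1) (by
      have : Summable fun k : ℕ => Real.Gamma α * ((t ^ α) ^ (k + 1) / Real.Gamma (α * (k + 1 : ℕ) + 1)) :=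
        ((summable_nat_add_iff 1).mpr (ml_summable hα (t ^ α))).mul_left _
      refine this.congr fun k => ?_
      rw [← key, intervalIntegral.integral_of_le ht.le]
      refine setIntegral_congr_fun measurableSet_Ioc fun s hs => ?_
      have h1 := ml_gamma_pos hα k
      have h2 : 0 ≤ t - s := sub_nonneg.mpr hs.2
      have h3 : 0 ≤ s := hs.1.le
      simp only [hF, norm_mul, norm_div, norm_pow, norm_neg]
      rw [Real.norm_of_nonneg h1.le, Real.norm_of_nonneg (by positivity : 0 ≤ s ^ α),
        Real.norm_of_nonneg (by positivity : 0 ≤ (t - s) ^ (α - 1))])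
  simp only [← intervalIntegral.integral_of_le ht.le, key2] at hs
  have hsum := (ml_summable hα (-(t ^ α))).hasSum
  have h1 := (hasSum_nat_add_iff' 1).mpr hsum
  have h2 := (h1.mul_left (Real.Gamma α)).neg
  have h3 := hs.unique h2
  have h4 : ∫ s in (0:ℝ)..t, (t - s) ^ (α - 1) * mittagLeffler α (-(s ^ α)) =
     ∫ s in (0:ℝ)..t, ∑' k, F k s := by
    congr 1; ext s
    simp only [hF, mittagLeffler, tsum_mul_left]
  rw [h4, h3]
  simp [mittagLeffler]
  field_simp
  ring

lemma ml_kernel {α : ℝ} (hα1 : α < 1) {p q P Q : ℝ} (hp : 0 < p) (hq : 0 < q) (hP : 0 < P)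
    (hQ : 0 < Q) (h : p * Q ≤ P * q) :
    q ^ (α - 1) * Q ^ (1 - α) ≤ P ^ (1 - α) * p ^ (α - 1) := by
  rw [show α - 1 = -(1 - α) by ring, Real.rpow_neg hq.le, Real.rpow_neg hp.le,
    inv_mul_eq_div, ← div_eq_mul_inv, ← Real.div_rpow hQ.le hq.le, ← Real.div_rpow hP.le hp.le]
  refine Real.rpow_le_rpow (by positivity) ?_ (by linarith)
  rw [div_le_div_iff₀ hq hp]
  linarith

lemma ml_const_int {α : ℝ} (hα : 0 < α) (a t : ℝ) :
    ∫ s in a..t, (t - s) ^ (α - 1) = (t - a) ^ α / α := by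
  rw [intervalIntegral.integral_comp_sub_left (fun x => x ^ (α - 1)) t,
    integral_rpow (Or.inl (by linarith))]
  simp [Real.zero_rpow hα.ne']

lemma ml_positive {α κ : ℝ} (hα : 0 < α) (hα1 : α < 1) (hκ : 0 < κ) {z g : ℝ → ℝ}
    (hz : Continuous z) (hz0 : 0 < z 0)
    (hg : ∀ a b, 0 < a → a ≤ b → a ^ (1 - α) * g a ≤ b ^ (1 - α) * g b)
    (heq : ∀ t, 0 < t → z t + κ * ∫ s in (0:ℝ)..t, (t - s) ^ (α - 1) * z s = g t) :
    ∀ t, 0 ≤ t → 0 < z t := by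
  by_contra! hcon
  obtain ⟨t', ht', hzt'⟩ := hcon
  set S : Set ℝ := Ici 0 ∩ z ⁻¹' (Iic 0) with hS
  have hSc : IsClosed S := isClosed_Ici.inter (isClosed_Iic.preimage hz)
  have hSb : BddBelow S := ⟨0, fun x hx => hx.1⟩
  have hmem : sInf S ∈ S := hSc.csInf_mem ⟨t', ht', hzt'⟩ hSb
  set t0 := sInf S with ht0
  have hzt0 : z t0 ≤ 0 := hmem.2
  have ht00 : 0 ≤ t0 := hmem.1
  have ht0pos : 0 < t0 := by
    rcases ht00.eq_or_lt with h | h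
    · rw [← h] at hzt0; linarith
    · exact h
  have hbefore : ∀ s, 0 ≤ s → s < t0 → 0 < z s := by
    intro s hs hst
    by_contra! h
    exact absurd (csInf_le hSb (⟨hs, h⟩ : s ∈ S)) (not_le.mpr hst)
  -- choice of the step
  obtain ⟨δ, hδ0, hδt, hδ⟩ : ∃ δ : ℝ, 0 < δ ∧ δ < t0 / 2 ∧ κ * (δ ^ α / α) < (1 / 2) ^ (1 - α) := by
    have hc : Tendsto (fun d : ℝ => κ * (d ^ α / α)) (𝓝[>] 0) (𝓝 0) := by
      have : Continuous (fun d : ℝ => κ * (d ^ α / α)) := by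
        have := Real.continuous_rpow_const hα.le
        fun_prop
      have h := this.tendsto 0
      simp only [Real.zero_rpow hα.ne', zero_div, mul_zero] at h
      exact h.mono_left nhdsWithin_le_nhds
    have e1 := hc.eventually_lt_const (u := (1 / 2 : ℝ) ^ (1 - α)) (by positivity)
    have e2 : ∀ᶠ d in 𝓝[>] (0:ℝ), d < t0 / 2 :=
      nhdsWithin_le_nhds (eventually_lt_nhds (by positivity))
    obtain ⟨d, ⟨h1, h2⟩, h3⟩ := ((e1.and e2).and self_mem_nhdsWithin).exists
    exact ⟨d, h3, h2, h1⟩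
  obtain ⟨t1, ht1, hmax⟩ := (isCompact_Icc (a := t0 - δ) (b := t0)).exists_isMaxOn
    ⟨t0, by constructor <;> linarith⟩ hz.continuousOn
  have hz1 : 0 < z t1 := lt_of_lt_of_le (hbefore (t0 - δ) (by linarith) (by linarith))
    (hmax (by constructor <;> linarith : t0 - δ ∈ Icc (t0 - δ) t0))
  have ht1lt : t1 < t0 := by
    rcases ht1.2.eq_or_lt with h | h
    · rw [h] at hz1; linarith
    · exact h
  have ht1pos : 0 < t1 := by linarith [ht1.1]
  set A := ∫ s in (0:ℝ)..t1, (t1 - s) ^ (α - 1) * z s with hA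
  set B := ∫ s in (0:ℝ)..t1, (t0 - s) ^ (α - 1) * z s with hB
  set D := ∫ s in t1..t0, (t0 - s) ^ (α - 1) * z s with hD
  have hsplit : ∫ s in (0:ℝ)..t0, (t0 - s) ^ (α - 1) * z s = B + D :=
    (intervalIntegral.integral_add_adjacent_intervals (ml_integrable hα t0 0 t1 hz)
      (ml_integrable hα t0 t1 t0 hz)).symm
  have E0 := heq t0 ht0pos
  have E1 := heq t1 ht1pos
  rw [hsplit] at E0
  rw [← hA] at E1
  have hG := hg t1 t0 ht1pos ht1lt.le
  set T0 := t0 ^ (1 - α) with hT0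
  set T1 := t1 ^ (1 - α) with hT1
  have hT0p : 0 < T0 := by positivity
  have hT1p : 0 < T1 := by positivity
  have hBA : T0 * B ≤ T1 * A := by
    rw [hA, hB, ← intervalIntegral.integral_const_mul, ← intervalIntegral.integral_const_mul]
    refine intervalIntegral.integral_mono_on_of_le_Ioo ht1pos.le
      ((ml_integrable hα t0 0 t1 hz).const_mul _) ((ml_integrable hα t1 0 t1 hz).const_mul _) ?_
    intro s hs
    have := ml_kernel hα1 (p := t1 - s) (q := t0 - s) (P := t1) (Q := t0)
      (by linarith [hs.2]) (by linarith [hs.2]) ht1pos ht0pos (by nlinarith [hs.1])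
    have hzs := hbefore s hs.1.le (by linarith [hs.2])
    calc T0 * ((t0 - s) ^ (α - 1) * z s) = ((t0 - s) ^ (α - 1) * T0) * z s := by ring
      _ ≤ (T1 * (t1 - s) ^ (α - 1)) * z s := by gcongr
      _ = _ := by ring
  have hDz : D ≤ z t1 * (δ ^ α / α) := by
    have : D ≤ ∫ s in t1..t0, (t0 - s) ^ (α - 1) * z t1 := by
      refine intervalIntegral.integral_mono_on ht1lt.le (ml_integrable hα t0 t1 t0 hz)
        (ml_integrable hα t0 t1 t0 continuous_const) ?_
      intro s hs
      have h1 : 0 ≤ t0 - s := by linarith [hs.2]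
      have h2 : z s ≤ z t1 := hmax (⟨by linarith [hs.1, ht1.1], hs.2⟩ : s ∈ Icc (t0 - δ) t0)
      gcongr
    rw [intervalIntegral.integral_mul_const, ml_const_int hα] at this
    have h3 : (t0 - t1) ^ α ≤ δ ^ α :=
      Real.rpow_le_rpow (by linarith) (by linarith [ht1.1]) hα.le
    calc D ≤ (t0 - t1) ^ α / α * z t1 := this
      _ ≤ δ ^ α / α * z t1 := by gcongr
      _ = _ := by ring
  have hrho : (1 / 2) ^ (1 - α) * T0 ≤ T1 := by
    rw [hT0, hT1, ← Real.mul_rpow (by norm_num) ht00]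
    exact Real.rpow_le_rpow (by positivity) (by linarith [ht1.1]) (by linarith)
  have k1 : κ * D ≤ z t1 * (κ * (δ ^ α / α)) := by
    calc κ * D ≤ κ * (z t1 * (δ ^ α / α)) := by gcongr
      _ = _ := by ring
  have k2 : z t1 * (κ * (δ ^ α / α)) < z t1 * (1 / 2) ^ (1 - α) := by gcongr
  have k3 : T0 * (κ * D) < z t1 * T1 := by
    calc T0 * (κ * D) < T0 * (z t1 * (1 / 2) ^ (1 - α)) := 
          mul_lt_mul_of_pos_left (k1.trans_lt k2) hT0p
      _ = z t1 * ((1 / 2) ^ (1 - α) * T0) := by ring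
      _ ≤ _ := by gcongr
  have k4 : κ * (T0 * B) ≤ κ * (T1 * A) := by gcongr
  have k5 : T0 * z t0 ≤ 0 := mul_nonpos_of_nonneg_of_nonpos hT0p.le hzt0
  rw [← E0, ← E1] at hG
  nlinarith

/-- Solutions of `u + κ k * u = 1` are positive and antitone, which gives the decay. -/
lemma ml_decay {α κ : ℝ} (hα : 0 < α) (hα1 : α < 1) (hκ : 0 < κ) {u : ℝ → ℝ}
    (hu : Continuous u) (hu0 : u 0 = 1)
    (heq : ∀ t, 0 < t → u t + κ * ∫ s in (0:ℝ)..t, (t - s) ^ (α - 1) * u s = 1) :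
    ∀ t, 0 < t → 0 < u t ∧ u t * (κ * (t ^ α / α)) ≤ 1 := by
  have hpos : ∀ t, 0 ≤ t → 0 < u t := by
    refine ml_positive hα hα1 hκ (g := fun _ => 1) hu (by rw [hu0]; exact one_pos) ?_ heq
    intro a b ha hab
    have := Real.rpow_le_rpow ha.le hab (by linarith : 0 ≤ 1 - α)
    linarith
  have hlt : ∀ h, 0 < h → u h < 1 := by
    intro h hh
    have : 0 < ∫ s in (0:ℝ)..h, (h - s) ^ (α - 1) * u s := by
      refine intervalIntegral.intervalIntegral_pos_of_pos_on (ml_integrable hα h 0 h hu) ?_ hh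
      intro s hs
      have h1 : 0 < h - s := by linarith [hs.2]
      have := hpos s hs.1.le
      positivity
    have e := heq h hh
    have := mul_pos hκ this
    linarith
  have hanti : ∀ t h, 0 ≤ t → 0 < h → u (t + h) ≤ u t := by
    intro t h ht hh
    have key := ml_positive hα hα1 hκ (z := fun t => u t - u (t + h))
      (g := fun t => κ * ∫ s in (0:ℝ)..h, (t + h - s) ^ (α - 1) * u s) (by fun_prop)
      (by simp [hu0, hlt h hh]) ?_ ?_ t ht
    · linarith
    · intro a b ha hab
      have hb : 0 < b := by linarith
      have : ∫ s in (0:ℝ)..h, a ^ (1 - α) * ((a + h - s) ^ (α - 1) * u s) ≤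
          ∫ s in (0:ℝ)..h, b ^ (1 - α) * ((b + h - s) ^ (α - 1) * u s) := by
        refine intervalIntegral.integral_mono_on_of_le_Ioo hh.le
          ((ml_integrable hα (a + h) 0 h hu).const_mul _)
          ((ml_integrable hα (b + h) 0 h hu).const_mul _) ?_
        intro s hs
        have hk := ml_kernel hα1 (p := b + h - s) (q := a + h - s) (P := b) (Q := a)
          (by linarith [hs.2]) (by linarith [hs.2]) hb ha (by nlinarith [hs.2])
        have hus := hpos s hs.1.le
        calc a ^ (1 - α) * ((a + h - s) ^ (α - 1) * u s)
            = ((a + h - s) ^ (α - 1) * a ^ (1 - α)) * u s := by ring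
          _ ≤ (b ^ (1 - α) * (b + h - s) ^ (α - 1)) * u s := by gcongr
          _ = _ := by ring
      rw [intervalIntegral.integral_const_mul, intervalIntegral.integral_const_mul] at this
      have := mul_le_mul_of_nonneg_left this hκ.le
      linarith
    · intro r hr
      have e1 := heq r hr
      have e2 := heq (r + h) (by linarith)
      have hsplit := intervalIntegral.integral_add_adjacent_intervals
        (ml_integrable hα (r + h) 0 h hu) (ml_integrable hα (r + h) h (r + h) hu)
      have hshift : ∫ s in h..(r + h), (r + h - s) ^ (α - 1) * u s =
          ∫ s in (0:ℝ)..r, (r - s) ^ (α - 1) * u (s + h) := by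
        have := intervalIntegral.integral_comp_add_right (a := 0) (b := r)
          (fun s => (r + h - s) ^ (α - 1) * u s) h
        simp only [add_sub_add_right_eq_sub, zero_add] at this
        exact this.symm
      have hsub : ∫ s in (0:ℝ)..r, (r - s) ^ (α - 1) * (u s - u (s + h)) =
          (∫ s in (0:ℝ)..r, (r - s) ^ (α - 1) * u s) -
          ∫ s in (0:ℝ)..r, (r - s) ^ (α - 1) * u (s + h) := by
        rw [← intervalIntegral.integral_sub (ml_integrable hα r 0 r hu)
          (ml_integrable hα r 0 r (z := fun s => u (s + h)) (by fun_prop))]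
        simp only [mul_sub]
      rw [hshift] at hsplit
      rw [← hsplit] at e2
      simp only [hsub]
      linarith
  intro t ht
  refine ⟨hpos t ht.le, ?_⟩
  have hle : ∫ s in (0:ℝ)..t, (t - s) ^ (α - 1) * u t ≤
      ∫ s in (0:ℝ)..t, (t - s) ^ (α - 1) * u s := by
    refine intervalIntegral.integral_mono_on_of_le_Ioo ht.le
      (ml_integrable hα t 0 t continuous_const) (ml_integrable hα t 0 t hu) ?_
    intro s hs
    have h1 : 0 ≤ t - s := by linarith [hs.2]
    have h2 : u t ≤ u s := by
      have := hanti s (t - s) hs.1.le (by linarith [hs.2])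
      simpa using this
    gcongr
  rw [intervalIntegral.integral_mul_const, ml_const_int hα, sub_zero] at hle
  have e := heq t ht
  have := mul_le_mul_of_nonneg_left hle hκ.le
  have := hpos t ht.le
  linarith

lemma ml_bound {α : ℝ} (hα : 0 < α) (hα1 : α < 1) {x : ℝ} (hx : 0 < x) :
    0 < mittagLeffler α (-x) ∧ x * mittagLeffler α (-x) ≤ α * Real.Gamma α := by
  have gα := Real.Gamma_pos_of_pos hα
  have hc : Continuous fun s : ℝ => mittagLeffler α (-(s ^ α)) :=
    (ml_continuous hα).comp (Real.continuous_rpow_const hα.le).neg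
  have h0 : mittagLeffler α (-((0:ℝ) ^ α)) = 1 := by
    rw [Real.zero_rpow hα.ne', neg_zero, mittagLeffler, tsum_eq_single 0]
    · simp
    · intro k hk
      simp [hk]
  have h := ml_decay hα hα1 (inv_pos.mpr gα) hc h0 (fun t ht => ml_volterra hα ht)
    (x ^ α⁻¹) (by positivity)
  rw [Real.rpow_inv_rpow hx.le hα.ne'] at h
  refine ⟨h.1, ?_⟩
  have h2 := h.2
  have e : mittagLeffler α (-x) * ((Real.Gamma α)⁻¹ * (x / α)) =
      x * mittagLeffler α (-x) / (α * Real.Gamma α) := by field_simp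
  rwa [e, div_le_one (by positivity)] at h2

end MLHelpers

theorem series_bound_lambda_sq (α : ℝ) (hα : α ∈ Set.Ioo (0:ℝ) 1) :
    ∃ C : ℝ, 0 < C ∧ ∀ (c lam : ℕ → ℝ), Summable (fun n => (c n) ^ 2) →
      (∀ n, 0 < lam n) → ∀ t : ℝ, 0 < t →
      Summable (fun n => (c n) ^ 2 * (lam n) ^ 2 *
        (mittagLeffler α (-(lam n) * t ^ α)) ^ 2) ∧
      ∑' n, (c n) ^ 2 * (lam n) ^ 2 * (mittagLeffler α (-(lam n) * t ^ α)) ^ 2 ≤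
        C ^ 2 * t ^ (-(2 * α)) * ∑' n, (c n) ^ 2 := by
  obtain ⟨hα0, hα1⟩ := hα
  have gα := Real.Gamma_pos_of_pos hα0
  refine ⟨α * Real.Gamma α, by positivity, ?_⟩
  intro c lam hc hlam t ht
  have hb : ∀ n, (c n) ^ 2 * (lam n) ^ 2 * (mittagLeffler α (-(lam n) * t ^ α)) ^ 2 ≤
      (α * Real.Gamma α) ^ 2 * t ^ (-(2 * α)) * (c n) ^ 2 := by
    intro n
    have hl := hlam n
    have htα : 0 < t ^ α := by positivity
    obtain ⟨h1, h2⟩ := ml_bound hα0 hα1 (x := lam n * t ^ α) (by positivity)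
    rw [← neg_mul] at h1 h2
    have e : t ^ (-(2 * α)) = ((t ^ α) ^ 2)⁻¹ := by
      rw [Real.rpow_neg ht.le, mul_comm, Real.rpow_mul ht.le, Real.rpow_two]
    have h3 := pow_le_pow_left₀ (by positivity) h2 2
    rw [e]
    calc (c n) ^ 2 * (lam n) ^ 2 * (mittagLeffler α (-(lam n) * t ^ α)) ^ 2
        = (lam n * t ^ α * mittagLeffler α (-(lam n) * t ^ α)) ^ 2 * ((t ^ α) ^ 2)⁻¹ * c n ^ 2 := by
          field_simp
      _ ≤ _ := by gcongr
  have hs := hc.mul_left ((α * Real.Gamma α) ^ 2 * t ^ (-(2 * α)))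
  have hs' := Summable.of_nonneg_of_le (fun n => by positivity) hb hs
  refine ⟨hs', ?_⟩
  rw [← tsum_mul_left]
  exact hs'.tsum_le_tsum hb hs
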